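/- Let ψ : Perm(Fin n) → T be the monoid homomorphism with ψ(s_i) = σ_i. If w, v ∈ Perm(Fin n) are such that w({1,2}) ∩ v({1,2}) ≠ ∅, then there exist permutations u, u' ∈ Perm(Fin n) such that ψ(w⁻¹)θ_1ψ(w) · ψ(v⁻¹)θ_1ψ(v) = ψ(u)·θ_1·ψ(u'). -/

import Mathlib

/-!
The Brauer monoid presentation from Kudryavtseva–Mazorchuk,
"On presentations of Brauer-type monoids", Section 3.

Generators: `Sum.inl i` represents `σ_{i+1}` and `Sum.inr i` represents `θ_{i+1}`
for `i : Fin (n-1)` (so the paper's indices `1, …, n-1` correspond to `i.val + 1`).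
-/

/-- Generator type: `Sum.inl i` is `σ_{i+1}`, `Sum.inr i` is `θ_{i+1}`. -/
abbrev BrauerGen (n : ℕ) := Fin (n - 1) ⊕ Fin (n - 1)

/-- The word `σ_{i+1}` in the free monoid. -/
def fσ {n : ℕ} (i : Fin (n - 1)) : FreeMonoid (BrauerGen n) := FreeMonoid.of (Sum.inl i)

/-- The word `θ_{i+1}` in the free monoid. -/
def fθ {n : ℕ} (i : Fin (n - 1)) : FreeMonoid (BrauerGen n) := FreeMonoid.of (Sum.inr i)

/-- The defining relations of the presentation of the Brauer monoid `𝔅_n`. -/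
inductive BrauerRel (n : ℕ) : FreeMonoid (BrauerGen n) → FreeMonoid (BrauerGen n) → Prop
  | sigma_sq (i) : BrauerRel n (fσ i * fσ i) 1
  | sigma_comm (i j) (h : 1 < Nat.dist i.1 j.1) : BrauerRel n (fσ i * fσ j) (fσ j * fσ i)
  | braid (i j) (h : Nat.dist i.1 j.1 = 1) :
      BrauerRel n (fσ i * fσ j * fσ i) (fσ j * fσ i * fσ j)
  | theta_idem (i) : BrauerRel n (fθ i * fθ i) (fθ i)
  | theta_comm (i j) (h : 1 < Nat.dist i.1 j.1) : BrauerRel n (fθ i * fθ j) (fθ j * fθ i)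
  | theta_theta_theta (i j) (h : Nat.dist i.1 j.1 = 1) :
      BrauerRel n (fθ i * fθ j * fθ i) (fθ i)
  | theta_sigma (i) : BrauerRel n (fθ i * fσ i) (fθ i)
  | sigma_theta (i) : BrauerRel n (fσ i * fθ i) (fθ i)
  | theta_sigma_comm (i j) (h : 1 < Nat.dist i.1 j.1) :
      BrauerRel n (fθ i * fσ j) (fσ j * fθ i)
  | sigma_theta_theta (i j) (h : Nat.dist i.1 j.1 = 1) :
      BrauerRel n (fσ i * fθ j * fθ i) (fσ j * fθ i)
  | theta_theta_sigma (i j) (h : Nat.dist i.1 j.1 = 1) :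
      BrauerRel n (fθ i * fθ j * fσ i) (fθ i * fσ j)

/-- The monoid `T` given by the presentation above. -/
abbrev BrauerMonoid (n : ℕ) := PresentedMonoid (BrauerRel n)

/-- The generator `σ_{i+1}` of `T`. -/
def σB {n : ℕ} (i : Fin (n - 1)) : BrauerMonoid n := PresentedMonoid.of (BrauerRel n) (Sum.inl i)

/-- The generator `θ_{i+1}` of `T`. -/
def θB {n : ℕ} (i : Fin (n - 1)) : BrauerMonoid n := PresentedMonoid.of (BrauerRel n) (Sum.inr i)

/-- The point `i` of `{1, …, n}` (0-based: `i.val`). -/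
def lo {n : ℕ} (i : Fin (n - 1)) : Fin n := ⟨i.1, by have := i.2; omega⟩

/-- The point `i + 1` of `{1, …, n}` (0-based: `i.val + 1`). -/
def hi {n : ℕ} (i : Fin (n - 1)) : Fin n := ⟨i.1 + 1, by have := i.2; omega⟩

/-- The adjacent transposition `s_{i+1} = (i+1, i+2)` of the symmetric group on `{1, …, n}`. -/
def sPerm {n : ℕ} (i : Fin (n - 1)) : Equiv.Perm (Fin n) := Equiv.swap (lo i) (hi i)

/-!
Write `θ = θ_1`. Setting aside the outer factors `ψ(w⁻¹)` and `ψ(v)` reduces the claim to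
`θ ψ(y) θ ∈ ψ(Sₙ) θ` for `y = w v⁻¹`, which carries a point of `{1, 2}` to a point of `{1, 2}`.
Since `θ` absorbs the transposition `(1 2)` on both sides, we may assume that `y` fixes `1`. Then
`y = (2 r) z` with `r = y(2)`, where `z` fixes both `1` and `2` and hence commutes with `θ`, so
everything follows from `θ ψ((2 r)) θ = θ`.

These properties of `θ_1` pass to every `θ_i` because `θ_{i+1} = σ_i σ_{i+1} θ_i σ_{i+1} σ_i`.
-/

open Equiv (swap)
open Equiv.Perm (mul_apply)

theorem mem_comap_centralizer_singleton_iff {G M : Type*} [Monoid G] [Monoid M] {f : G →* M}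
    {g : G} {m : M} : g ∈ (Submonoid.centralizer {m}).comap f ↔ Commute m (f g) := by
  simp only [Submonoid.mem_comap, Submonoid.mem_centralizer_iff, Set.mem_singleton_iff, forall_eq,
    commute_iff_eq]

theorem mem_of_forall_swap_mem {α : Type*} [DecidableEq α] {C : Submonoid (Equiv.Perm α)}
    {S : Set α} [Finite S] (hC : ∀ a ∈ S, ∀ b ∈ S, swap a b ∈ C) {y : Equiv.Perm α}
    (hy : ∀ x ∉ S, y x = x) : y ∈ C := by
  classical
  have extended_mem (z : Equiv.Perm S) : z.ofSubtype ∈ C := by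
    induction z using Equiv.Perm.swap_induction_on with
    | one => simp only [map_one, one_mem]
    | swap_mul f a b _ ih =>
      rw [map_mul, Equiv.Perm.ofSubtype_swap_eq]
      exact mul_mem (hC a a.2 b b.2) ih
  have apply_mem_iff (x : α) : y x ∈ S ↔ x ∈ S := by
    refine ⟨fun hx => ?_, fun hx => ?_⟩ <;> by_contra hx'
    · exact hx' (hy x hx' ▸ hx)
    · exact hx' ((y.injective (hy (y x) hx')).symm ▸ hx)
  rw [← Equiv.Perm.ofSubtype_subtypePerm apply_mem_iff fun x hx => by_contra (hx ∘ hy x)]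
  exact extended_mem _

theorem swap_mem_of_forall_sPerm_mem {n k : ℕ} {C : Submonoid (Equiv.Perm (Fin n))}
    (hC : ∀ j : Fin (n - 1), k ≤ j.1 → sPerm j ∈ C) {a b : Fin n} (ha : k ≤ a.1) (hb : k ≤ b.1) :
    swap a b ∈ C := by
  have swap_mem (m : ℕ) (hm : k ≤ m) (hmn : m < n) : swap ⟨k, by omega⟩ ⟨m, hmn⟩ ∈ C := by
    induction m, hm using Nat.le_induction with
    | base => exact Equiv.swap_self (_ : Fin n) ▸ one_mem C
    | succ m hm ih =>
      exact SubmonoidClass.swap_mem_trans C (ih (by omega)) (hC ⟨m, by omega⟩ hm)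
  exact SubmonoidClass.swap_mem_trans C (Equiv.swap_comm _ a ▸ swap_mem a ha a.2)
    (swap_mem b hb b.2)

/-- `θ` multiplies with the image of `ψ` as the Brauer diagram whose only non-vertical arcs join `p`
to `q`, one at the top and one at the bottom. The case `r = q` of `mul_swap_mul` says that `θ` is
idempotent. -/
structure IsCupCap {α M : Type*} [DecidableEq α] [Monoid M] (ψ : Equiv.Perm α →* M) (θ : M)
    (p q : α) : Prop where
  ne : p ≠ q
  commute_of_fixed : ∀ y : Equiv.Perm α, y p = p → y q = q → Commute θ (ψ y)
  mul_swap : θ * ψ (swap p q) = θ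
  swap_mul : ψ (swap p q) * θ = θ
  mul_swap_mul : ∀ r ≠ p, θ * ψ (swap q r) * θ = θ

namespace IsCupCap

variable {α M : Type*} [DecidableEq α] [Monoid M] {ψ : Equiv.Perm α →* M} {θ : M} {p q : α}

theorem conj (h : IsCupCap ψ θ p q) (g : Equiv.Perm α) :
    IsCupCap ψ (ψ g * θ * ψ g⁻¹) (g p) (g q) := by
  have map_inv_mul_map (x : M) : ψ g⁻¹ * (ψ g * x) = x := by
    rw [← mul_assoc, ← map_mul, inv_mul_cancel, map_one, one_mul]
  refine ⟨g.injective.ne h.ne, fun y hp hq => ?_, ?_, ?_, fun r hr => ?_⟩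
  · have fixed {x : α} (hx : y (g x) = g x) : (g⁻¹ * y * g) x = x := by
      rw [mul_apply, mul_apply, hx, Equiv.Perm.inv_eq_iff_eq]
    have comm : θ * ψ (g⁻¹ * y * g) = ψ (g⁻¹ * y * g) * θ :=
      h.commute_of_fixed _ (fixed hp) (fixed hq)
    calc ψ g * θ * ψ g⁻¹ * ψ y
        = ψ g * (θ * ψ (g⁻¹ * y * g)) * ψ g⁻¹ := by
          simp only [mul_assoc, ← map_mul, mul_inv_cancel, mul_one]
      _ = ψ y * (ψ g * θ * ψ g⁻¹) := by
          rw [comm]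
          simp only [← mul_assoc, ← map_mul, mul_inv_cancel, one_mul]
  · rw [Equiv.swap_apply_apply, map_mul, map_mul]
    simp only [mul_assoc, map_inv_mul_map]
    rw [← mul_assoc θ, h.mul_swap]
  · rw [Equiv.swap_apply_apply, map_mul, map_mul]
    simp only [mul_assoc, map_inv_mul_map]
    rw [← mul_assoc _ θ, h.swap_mul]
  · obtain ⟨r, rfl⟩ := g.surjective r
    have absorb (x : M) : θ * (ψ (swap q r) * (θ * x)) = θ * x := by
      rw [← mul_assoc, ← mul_assoc, h.mul_swap_mul r (ne_of_apply_ne g hr)]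
    rw [Equiv.swap_apply_apply, map_mul, map_mul]
    simp only [mul_assoc, map_inv_mul_map, absorb]

theorem mul_swap_of_mem (h : IsCupCap ψ θ p q) {c : α} (hc : c ∈ ({p, q} : Set α)) :
    θ * ψ (swap p c) = θ := by
  rcases hc with rfl | rfl
  · rw [Equiv.swap_self, ← Equiv.Perm.one_def, map_one, mul_one]
  · exact h.mul_swap

theorem swap_mul_of_mem (h : IsCupCap ψ θ p q) {c : α} (hc : c ∈ ({p, q} : Set α)) :
    ψ (swap p c) * θ = θ := by
  rcases hc with rfl | rfl
  · rw [Equiv.swap_self, ← Equiv.Perm.one_def, map_one, one_mul]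
  · exact h.swap_mul

theorem exists_mul_map_mul_of_apply_eq_self (h : IsCupCap ψ θ p q) {y : Equiv.Perm α}
    (hy : y p = p) : ∃ u : Equiv.Perm α, θ * ψ y * θ = ψ u * θ := by
  have image_ne : y q ≠ p := fun hq => h.ne (y.injective (hy.trans hq.symm))
  let z : Equiv.Perm α := swap q (y q) * y
  have y_eq : y = swap q (y q) * z := (Equiv.swap_mul_self_mul _ _ y).symm
  have z_comm : θ * ψ z = ψ z * θ := h.commute_of_fixed z
    (by rw [mul_apply, hy, Equiv.swap_apply_of_ne_of_ne h.ne image_ne.symm])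
    (by rw [mul_apply, Equiv.swap_apply_right])
  refine ⟨z, ?_⟩
  calc θ * ψ y * θ
      = θ * ψ (swap q (y q)) * (ψ z * θ) := by
        rw [congrArg ψ y_eq, map_mul]
        simp only [mul_assoc]
    _ = θ * ψ (swap q (y q)) * θ * ψ z := by rw [← z_comm, mul_assoc _ θ]
    _ = ψ z * θ := by rw [h.mul_swap_mul _ image_ne, z_comm]

theorem exists_mul_map_mul_of_apply_mem (h : IsCupCap ψ θ p q) {y : Equiv.Perm α} {a : α}
    (ha : a ∈ ({p, q} : Set α)) (hya : y a ∈ ({p, q} : Set α)) :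
    ∃ u : Equiv.Perm α, θ * ψ y * θ = ψ u * θ := by
  obtain ⟨u, hu⟩ := h.exists_mul_map_mul_of_apply_eq_self
    (y := swap p (y a) * y * swap p a) (by simp only [mul_apply, Equiv.swap_apply_left,
      Equiv.swap_apply_right])
  refine ⟨u, ?_⟩
  calc θ * ψ y * θ
      = θ * ψ (swap p (y a)) * ψ y * (ψ (swap p a) * θ) := by
        rw [h.mul_swap_of_mem hya, h.swap_mul_of_mem ha]
    _ = θ * ψ (swap p (y a) * y * swap p a) * θ := by simp only [map_mul, mul_assoc]
    _ = ψ u * θ := hu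

theorem exists_conj_mul_conj (h : IsCupCap ψ θ p q) {w v : Equiv.Perm α}
    (hwv : (⇑w⁻¹ '' {p, q} ∩ ⇑v⁻¹ '' {p, q}).Nonempty) :
    ∃ u u' : Equiv.Perm α,
      (ψ w⁻¹ * θ * ψ w) * (ψ v⁻¹ * θ * ψ v) = ψ u * θ * ψ u' := by
  obtain ⟨_, ⟨b, hb, rfl⟩, a, ha, hab⟩ := hwv
  have image_eq : (w * v⁻¹) a = b :=
    (congrArg w hab).trans (w.apply_symm_apply b)
  obtain ⟨u, hu⟩ := h.exists_mul_map_mul_of_apply_mem ha (image_eq ▸ hb)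
  refine ⟨w⁻¹ * u, v, ?_⟩
  calc (ψ w⁻¹ * θ * ψ w) * (ψ v⁻¹ * θ * ψ v)
      = ψ w⁻¹ * (θ * ψ (w * v⁻¹) * θ) * ψ v := by simp only [map_mul, mul_assoc]
    _ = ψ (w⁻¹ * u) * θ * ψ v := by rw [hu, map_mul, mul_assoc _ (ψ u)]

end IsCupCap

section Relations

variable {n : ℕ} {i j : Fin (n - 1)}

theorem sigmaB_mul_self (i : Fin (n - 1)) : σB i * σB i = 1 :=
  PresentedMonoid.mk_eq_mk_of_rel (.sigma_sq i)

theorem thetaB_mul_self (i : Fin (n - 1)) : θB i * θB i = θB i :=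
  PresentedMonoid.mk_eq_mk_of_rel (.theta_idem i)

theorem thetaB_mul_sigmaB_self (i : Fin (n - 1)) : θB i * σB i = θB i :=
  PresentedMonoid.mk_eq_mk_of_rel (.theta_sigma i)

theorem sigmaB_mul_thetaB_self (i : Fin (n - 1)) : σB i * θB i = θB i :=
  PresentedMonoid.mk_eq_mk_of_rel (.sigma_theta i)

theorem commute_thetaB_sigmaB (h : 1 < Nat.dist i.1 j.1) : Commute (θB i) (σB j) :=
  PresentedMonoid.mk_eq_mk_of_rel (.theta_sigma_comm i j h)

theorem thetaB_mul_thetaB_mul_thetaB (h : Nat.dist i.1 j.1 = 1) : θB i * θB j * θB i = θB i :=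
  PresentedMonoid.mk_eq_mk_of_rel (.theta_theta_theta i j h)

theorem sigmaB_mul_thetaB_mul_thetaB (h : Nat.dist i.1 j.1 = 1) :
    σB i * θB j * θB i = σB j * θB i :=
  PresentedMonoid.mk_eq_mk_of_rel (.sigma_theta_theta i j h)

theorem thetaB_mul_thetaB_mul_sigmaB (h : Nat.dist i.1 j.1 = 1) :
    θB i * θB j * σB i = θB i * σB j :=
  PresentedMonoid.mk_eq_mk_of_rel (.theta_theta_sigma i j h)

theorem thetaB_mul_sigmaB_mul_thetaB (h : Nat.dist i.1 j.1 = 1) : θB i * σB j * θB i = θB i := by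
  rw [← thetaB_mul_thetaB_mul_sigmaB h, mul_assoc, sigmaB_mul_thetaB_self,
    thetaB_mul_thetaB_mul_thetaB h]

theorem thetaB_eq_conj_thetaB (h : Nat.dist i.1 j.1 = 1) :
    θB j = σB i * σB j * θB i * (σB j * σB i) := by
  have theta_theta : θB i * θB j = θB i * (σB j * σB i) := by
    rw [← mul_assoc, ← thetaB_mul_thetaB_mul_sigmaB h, mul_assoc, sigmaB_mul_self, mul_one]
  calc θB j = σB i * (σB i * θB j) := by rw [← mul_assoc, sigmaB_mul_self, one_mul]
    _ = σB i * σB j * (θB i * θB j) := by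
      rw [← sigmaB_mul_thetaB_mul_thetaB (Nat.dist_comm i.1 j.1 ▸ h)]
      simp only [mul_assoc]
    _ = σB i * σB j * θB i * (σB j * σB i) := by rw [theta_theta, mul_assoc _ (θB i)]

end Relations

section SymmetricGroupAction

variable {n : ℕ} {ψ : Equiv.Perm (Fin n) →* BrauerMonoid n} {i : Fin (n - 1)}

theorem commute_thetaB_map_swap (hψ : ∀ j, ψ (sPerm j) = σB j) {a b : Fin n} (ha : hi i < a)
    (hb : hi i < b) : Commute (θB i) (ψ (swap a b)) := by
  have sPerm_mem (j : Fin (n - 1)) (hj : i.1 + 2 ≤ j.1) :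
      sPerm j ∈ (Submonoid.centralizer {θB i}).comap ψ := by
    rw [mem_comap_centralizer_singleton_iff, hψ]
    exact commute_thetaB_sigmaB (by simp only [Nat.dist]; omega)
  exact mem_comap_centralizer_singleton_iff.1 (swap_mem_of_forall_sPerm_mem sPerm_mem ha hb)

theorem thetaB_mul_map_swap_mul_thetaB (hψ : ∀ j, ψ (sPerm j) = σB j) {r : Fin n}
    (hr : hi i < r) : θB i * ψ (swap (hi i) r) * θB i = θB i := by
  have hr' : i.1 + 1 < r.1 := hr
  let j : Fin (n - 1) := ⟨i.1 + 1, by omega⟩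
  have i_lt : hi i < hi j := Nat.lt_succ_self _
  have comm : θB i * ψ (swap (hi j) r) = ψ (swap (hi j) r) * θB i :=
    commute_thetaB_map_swap hψ i_lt hr
  have swap_eq : swap (hi i) r = swap (hi j) r * sPerm j * swap (hi j) r := by
    have conj_eq := Equiv.swap_apply_apply (swap (hi j) r) (hi i) (hi j)
    rwa [Equiv.swap_apply_of_ne_of_ne i_lt.ne hr.ne, Equiv.swap_apply_left,
      Equiv.swap_inv] at conj_eq
  calc θB i * ψ (swap (hi i) r) * θB i
      = θB i * ψ (swap (hi j) r) * σB j * (ψ (swap (hi j) r) * θB i) := by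
        rw [swap_eq, map_mul, map_mul, hψ]
        simp only [mul_assoc]
    _ = ψ (swap (hi j) r) * θB i * σB j * (θB i * ψ (swap (hi j) r)) :=
        congrArg₂ (· * σB j * ·) comm comm.symm
    _ = ψ (swap (hi j) r) * (θB i * σB j * θB i) * ψ (swap (hi j) r) := by
        simp only [mul_assoc]
    _ = ψ (swap (hi j) r * swap (hi j) r) * θB i := by
        rw [thetaB_mul_sigmaB_mul_thetaB (by simp [j, Nat.dist]), mul_assoc, comm, ← mul_assoc,
          map_mul]
    _ = θB i := by rw [Equiv.swap_mul_self, map_one, one_mul]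

theorem isCupCap_thetaB_of_val_eq_zero (hψ : ∀ j, ψ (sPerm j) = σB j) (hi0 : i.1 = 0) :
    IsCupCap ψ (θB i) (lo i) (hi i) where
  ne := by simp [lo, hi]
  commute_of_fixed y hlo hhi := by
    have y_mem : y ∈ (Submonoid.centralizer {θB i}).comap ψ := by
      refine mem_of_forall_swap_mem (S := Set.Ioi (hi i)) (fun a ha b hb => ?_) fun x hx => ?_
      · exact mem_comap_centralizer_singleton_iff.2 (commute_thetaB_map_swap hψ ha hb)
      · have x_mem : x = lo i ∨ x = hi i := by
          simp only [Set.mem_Ioi, Fin.lt_def, Fin.ext_iff, lo, hi] at hx ⊢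
          omega
        rcases x_mem with rfl | rfl
        exacts [hlo, hhi]
    exact mem_comap_centralizer_singleton_iff.1 y_mem
  mul_swap := (congrArg (θB i * ·) (hψ i)).trans (thetaB_mul_sigmaB_self i)
  swap_mul := (congrArg (· * θB i) (hψ i)).trans (sigmaB_mul_thetaB_self i)
  mul_swap_mul r hr := by
    have r_cases : r = hi i ∨ hi i < r := by
      simp only [ne_eq, Fin.lt_def, Fin.ext_iff, lo, hi] at hr ⊢
      omega
    rcases r_cases with rfl | hlt
    · rw [Equiv.swap_self, ← Equiv.Perm.one_def, map_one, mul_one, thetaB_mul_self]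
    · exact thetaB_mul_map_swap_mul_thetaB hψ hlt

theorem isCupCap_thetaB_of_val_eq_succ (hψ : ∀ j, ψ (sPerm j) = σB j) {j : Fin (n - 1)}
    (hij : j.1 = i.1 + 1) (h : IsCupCap ψ (θB i) (lo i) (hi i)) :
    IsCupCap ψ (θB j) (lo j) (hi j) := by
  have lo_j : lo j = hi i := Fin.ext hij
  have lo_ne_hi (k : Fin (n - 1)) : lo k ≠ hi k := by simp [lo, hi]
  have lo_i_ne : lo i ≠ hi j := by
    simp only [ne_eq, Fin.ext_iff, lo, hi]
    omega
  have map_lo : (sPerm i * sPerm j) (lo i) = lo j := by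
    rw [mul_apply, sPerm, sPerm, lo_j, Equiv.swap_apply_of_ne_of_ne (lo_ne_hi i) lo_i_ne,
      Equiv.swap_apply_left]
  have map_hi : (sPerm i * sPerm j) (hi i) = hi j := by
    rw [mul_apply, sPerm, sPerm, lo_j, Equiv.swap_apply_left,
      Equiv.swap_apply_of_ne_of_ne lo_i_ne.symm (lo_j ▸ (lo_ne_hi j).symm)]
  have inv_eq : (sPerm i * sPerm j)⁻¹ = sPerm j * sPerm i := by
    simp only [sPerm, mul_inv_rev, Equiv.swap_inv]
  have theta_eq : θB j = ψ (sPerm i * sPerm j) * θB i * ψ (sPerm i * sPerm j)⁻¹ := by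
    rw [inv_eq, map_mul, map_mul, hψ, hψ,
      ← thetaB_eq_conj_thetaB (by rw [Nat.dist, hij]; omega)]
  rw [theta_eq, ← map_lo, ← map_hi]
  exact h.conj _

theorem isCupCap_thetaB (hψ : ∀ j, ψ (sPerm j) = σB j) (i : Fin (n - 1)) :
    IsCupCap ψ (θB i) (lo i) (hi i) := by
  obtain ⟨k, hk⟩ := i
  induction k with
  | zero => exact isCupCap_thetaB_of_val_eq_zero hψ rfl
  | succ k ih => exact isCupCap_thetaB_of_val_eq_succ hψ rfl (ih (by omega))

end SymmetricGroupAction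

theorem brauer_eps_product_general {n : ℕ} {ψ : Equiv.Perm (Fin n) →* BrauerMonoid n}
    (hψ : ∀ j : Fin (n - 1), ψ (sPerm j) = σB j) (i : Fin (n - 1)) {w v : Equiv.Perm (Fin n)}
    (h : (⇑w⁻¹ '' {lo i, hi i} ∩ ⇑v⁻¹ '' {lo i, hi i}).Nonempty) :
    ∃ u u' : Equiv.Perm (Fin n),
      (ψ w⁻¹ * θB i * ψ w) * (ψ v⁻¹ * θB i * ψ v) = ψ u * θB i * ψ u' :=
  (isCupCap_thetaB hψ i).exists_conj_mul_conj h

/-- Lemma `lemma204` of Kudryavtseva–Mazorchuk: if `w({1,2}) ∩ v({1,2}) ≠ ∅` then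
`ψ(w⁻¹) θ_1 ψ(w) · ψ(v⁻¹) θ_1 ψ(v) = ψ(u) θ_1 ψ(u')` for some permutations `u, u'`.
(The symmetric group acts on `{1, …, n}` on the *right*, so `w({1,2})` is the image of
`{1,2}` under `⇑w⁻¹` in terms of Mathlib's left-composition convention.) -/
theorem brauer_eps_product (n : ℕ) (hn : 3 ≤ n)
    (ψ : Equiv.Perm (Fin n) →* BrauerMonoid n)
    (hψ : ∀ i : Fin (n - 1), ψ (sPerm i) = σB i)
    (w v : Equiv.Perm (Fin n))
    (h : ⇑w⁻¹ '' ({⟨0, by omega⟩, ⟨1, by omega⟩} : Set (Fin n)) ∩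
         ⇑v⁻¹ '' ({⟨0, by omega⟩, ⟨1, by omega⟩} : Set (Fin n)) ≠ ∅) :
    ∃ u u' : Equiv.Perm (Fin n),
      (ψ w⁻¹ * θB ⟨0, by omega⟩ * ψ w) * (ψ v⁻¹ * θB ⟨0, by omega⟩ * ψ v) =
        ψ u * θB ⟨0, by omega⟩ * ψ u' :=
  brauer_eps_product_general hψ ⟨0, by omega⟩ (Set.nonempty_iff_ne_empty.2 h)
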